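/- arXiv:1609.07786 — 4 statements merged into one kernel-verified Lean document; each statement's English description precedes it below -/
import Mathlib

section
/- Let N be a positive integer, let Z ⊆ {0,1}^N be a finite nonempty set, let f : Z → {0,1} be non-constant, and let G be an extended learning graph for f with complexity C(G). Then the general adversary bound of f is at most C(G): there exists a family (X_j)_{j∈[N]} of positive semidefinite real matrices with rows and columns indexed by Z such that Σ_{j : x_j ≠ y_j} X_j[x,y] = 1 for all x, y ∈ Z with f(x) ≠ f(y), and max_{z∈Z} Σ_{j∈[N]} X_j[z,z] ≤ C(G). -/
/-- An *extended learning graph* for a function `f : Z → {0,1}` on a set of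
inputs `Z ⊆ {0,1}^N`.  It consists of a finite directed acyclic graph rooted at
`root` (acyclicity is forced by the labelling: along each edge the label grows
by exactly one index), a labelling `S` of the vertices by subsets of `[N]` with
`S root = ∅`, nonnegative weights `w z b e` (for each input `z`, bit `b` and
edge `e`) that depend on `z` only through its restriction to `S e.2` and that
satisfy the compatibility condition between negative and positive instances,
and, for every positive input `y`, a unit flow `p y` sourced at the root,
vanishing on edges of zero positive weight, whose sinks are labelled by
1-certificates for `f` on `y`. -/
structure ExtendedLearningGraph (N : ℕ) (Z : Finset (Fin N → Bool))
    (f : (Fin N → Bool) → Bool) where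
  /-- number of vertices; the vertex set is `Fin n`. -/
  n : ℕ
  /-- the set of (directed) edges -/
  E : Finset (Fin n × Fin n)
  /-- the root -/
  root : Fin n
  /-- the labelling of vertices by subsets of `[N]` -/
  S : Fin n → Finset (Fin N)
  S_root : S root = ∅
  /-- along each edge the label grows by exactly one new index (this also
  forces the graph to be acyclic) -/
  S_edge : ∀ e ∈ E, ∃ j ∉ S e.1, S e.2 = insert j (S e.1)
  /-- the graph is rooted at `root`: every vertex is reachable from it -/
  reach : ∀ v : Fin n, Relation.ReflTransGen (fun u v => (u, v) ∈ E) root v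
  /-- the weights `w z b e` -/
  w : (Fin N → Bool) → Bool → Fin n × Fin n → ℝ
  w_nonneg : ∀ z b e, 0 ≤ w z b e
  /-- `w z b e` depends on `z` only through the restriction of `z` to `S e.2` -/
  w_local : ∀ z z' b, ∀ e ∈ E, (∀ j ∈ S e.2, z j = z' j) → w z b e = w z' b e
  /-- compatibility: `w x 0 e = w y 1 e` whenever the negative instance `x` and
  the positive instance `y` agree on `S e.1` and differ on the loaded index -/
  w_compat : ∀ x ∈ Z, ∀ y ∈ Z, f x = false → f y = true → ∀ e ∈ E,
      (∀ j ∈ S e.1, x j = y j) →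
      (∃ j ∉ S e.1, S e.2 = insert j (S e.1) ∧ x j ≠ y j) →
      w x false e = w y true e
  /-- the flows `p y` for positive instances `y` -/
  p : (Fin N → Bool) → Fin n × Fin n → ℝ
  p_nonneg : ∀ y e, 0 ≤ p y e
  /-- `p y` is a unit flow: the net outflow from the root is `1` -/
  p_root : ∀ y ∈ Z, f y = true →
      (∑ e ∈ E.filter fun e => e.1 = root, p y e)
        - (∑ e ∈ E.filter fun e => e.2 = root, p y e) = 1
  /-- flow conservation at every vertex other than the root and the sinks of
  the flow (a sink being a vertex with no outgoing flow) -/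
  p_conserve : ∀ y ∈ Z, f y = true → ∀ v : Fin n, v ≠ root →
      (∑ e ∈ E.filter fun e => e.1 = v, p y e) ≠ 0 →
      (∑ e ∈ E.filter fun e => e.1 = v, p y e)
        = (∑ e ∈ E.filter fun e => e.2 = v, p y e)
  /-- every sink of the flow `p y` (a vertex with positive incoming flow and no
  outgoing flow) is labelled by a `1`-certificate for `f` on `y` -/
  p_sink_cert : ∀ y ∈ Z, f y = true → ∀ v : Fin n,
      (∑ e ∈ E.filter fun e => e.2 = v, p y e) ≠ 0 →
      (∑ e ∈ E.filter fun e => e.1 = v, p y e) = 0 →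
      ∀ z ∈ Z, (∀ j ∈ S v, z j = y j) → f z = true
  /-- the flow vanishes on edges with zero positive weight -/
  p_zero : ∀ y ∈ Z, f y = true → ∀ e ∈ E, w y true e = 0 → p y e = 0

namespace ExtendedLearningGraph

variable {N : ℕ} {Z : Finset (Fin N → Bool)} {f : (Fin N → Bool) → Bool}

/-- The negative complexity `C^0(G, x) = Σ_{e ∈ E} w_x^0(e)`. -/
noncomputable def negComplexity (G : ExtendedLearningGraph N Z f)
    (x : Fin N → Bool) : ℝ :=
  ∑ e ∈ G.E, G.w x false e

/-- The positive complexity `C^1(G, y) = Σ_{e ∈ E} p_y(e)² / w_y^1(e)` (with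
the convention that a term with `p_y(e) = 0` equals `0`; recall that in Lean
division by zero yields zero, and `p_y(e) ≠ 0` forces `w_y^1(e) ≠ 0`). -/
noncomputable def posComplexity (G : ExtendedLearningGraph N Z f)
    (y : Fin N → Bool) : ℝ :=
  ∑ e ∈ G.E, (G.p y e) ^ 2 / G.w y true e

end ExtendedLearningGraph

/-!
Fix `x` negative and `y` positive. The vertices on whose labels `x` and `y` agree contain the root
and no sink of the flow `p y`, so the edges leaving this set carry total flow `1`. Give every edge
`e` the amplitude `√(w x 0 e)` on negative and `p y e / √(w y 1 e)` on positive inputs. By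
compatibility the two amplitudes multiply to `p y e` on each edge of the cut, while their squares
sum to the negative and positive complexity. On an edge loading `j`, color the inputs so that a
negative and a positive one have the same color exactly when they agree before the edge and differ
at `j`. The Gram matrices of the amplitudes, restricted to inputs of equal color and summed over the
edges loading `j`, give `X j` up to a diagonal rescaling that balances the two complexities. -/

section Cut

variable {V M : Type*} [DecidableEq V] [AddCommGroup M]

/-- The net outflow at the vertex `v` of a flow `p` on the directed graph with edge set `E`. -/
def netOutflow (E : Finset (V × V)) (p : V × V → M) (v : V) : M :=
  (∑ e ∈ E with e.1 = v, p e) - ∑ e ∈ E with e.2 = v, p e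

theorem sum_netOutflow (E : Finset (V × V)) (p : V × V → M) (A : Finset V) :
    ∑ v ∈ A, netOutflow E p v =
      (∑ e ∈ E with e.1 ∈ A ∧ e.2 ∉ A, p e) - ∑ e ∈ E with e.1 ∉ A ∧ e.2 ∈ A, p e := by
  simp only [netOutflow, Finset.sum_sub_distrib, Finset.sum_fiberwise_eq_sum_filter]
  simp only [Finset.sum_filter, ← Finset.sum_sub_distrib]
  refine Finset.sum_congr rfl fun e _ => ?_
  by_cases h₁ : e.1 ∈ A <;> by_cases h₂ : e.2 ∈ A <;> simp [h₁, h₂]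

end Cut

theorem sum_sum_filter_of_existsUnique {α β M : Type*} [AddCommMonoid M] {s : Finset α}
    {t : Finset β} {r : α → β → Prop} [∀ a b, Decidable (r a b)]
    (h : ∀ a ∈ s, ∃! b, b ∈ t ∧ r a b) (g : α → M) :
    ∑ b ∈ t, ∑ a ∈ s with r a b, g a = ∑ a ∈ s, g a := by
  have hcard : ∀ a ∈ s, (t.filter (r a)).card = 1 := fun a ha =>
    Finset.card_eq_one_iff_existsUnique.2 (by simpa only [Finset.mem_filter] using h a ha)
  calc ∑ b ∈ t, ∑ a ∈ s with r a b, g a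
      = ∑ a ∈ s, ∑ b ∈ t with r a b, g a :=
        (Finset.sum_sum_bipartiteAbove_eq_sum_sum_bipartiteBelow r fun a _ => g a).symm
    _ = ∑ a ∈ s, g a := Finset.sum_congr rfl fun a ha => by
        rw [Finset.sum_const, hcard a ha, one_smul]

section PosSemidef

/-- The Gram matrix of the scalars `φ x`, with the entries between different color classes of
`c` set to zero. -/
def colorGram {ι κ R : Type*} [DecidableEq κ] [Mul R] [Zero R] [Star R] (c : ι → κ)
    (φ : ι → R) : Matrix ι ι R :=
  Matrix.of fun x y => if c x = c y then φ x * star (φ y) else 0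

open scoped ComplexOrder in
theorem posSemidef_colorGram {ι κ 𝕜 : Type*} [Finite ι] [DecidableEq κ] [RCLike 𝕜] (c : ι → κ)
    (φ : ι → 𝕜) : (colorGram c φ).PosSemidef := by
  have hclasses : ((1 : Matrix κ κ 𝕜).submatrix c c).PosSemidef := Matrix.PosSemidef.one.submatrix c
  convert hclasses.hadamard (Matrix.posSemidef_vecMulVec_self_star φ) using 1
  ext x y
  simp [colorGram, Matrix.one_apply, Matrix.vecMulVec_apply]

theorem exists_posSemidef_rescale {ι κ : Type*} [Finite ι] [Fintype κ] {X : κ → Matrix ι ι ℝ}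
    (hX : ∀ j, (X j).PosSemidef) {β : ι → ℝ} (hβ : ∀ x, 0 < β x)
    (hdiag : ∀ x, ∑ j, X j x x ≤ β x) {c : ℝ} (hc : 0 < c) :
    ∃ Y : κ → Matrix ι ι ℝ, (∀ j, (Y j).PosSemidef) ∧
      (∀ j x y, β x * β y = c ^ 2 → Y j x y = X j x y) ∧ ∀ x, ∑ j, Y j x x ≤ c := by
  let d : ι → ℝ := fun x => √(c / β x)
  have hβc : ∀ x, 0 ≤ c / β x := fun x => (div_pos hc (hβ x)).le
  refine ⟨fun j => (X j).hadamard (Matrix.vecMulVec d (star d)),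
    fun j => (hX j).hadamard (Matrix.posSemidef_vecMulVec_self_star d), fun j x y hxy => ?_,
    fun x => ?_⟩
  · have hdxy : d x * d y = 1 := by
      rw [← Real.sqrt_mul (hβc x), div_mul_div_comm, hxy, ← sq, div_self (pow_pos hc 2).ne',
        Real.sqrt_one]
    simp [Matrix.vecMulVec_apply, hdxy]
  · calc ∑ j, (X j).hadamard (Matrix.vecMulVec d (star d)) x x
        = (∑ j, X j x x) * (c / β x) := by
          simp [Matrix.vecMulVec_apply, d, Real.mul_self_sqrt (hβc x), Finset.sum_mul]
      _ ≤ β x * (c / β x) := mul_le_mul_of_nonneg_right (hdiag x) (hβc x)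
      _ = c := mul_div_cancel₀ c (hβ x).ne'

end PosSemidef

namespace ExtendedLearningGraph

variable {N : ℕ} {Z : Finset (Fin N → Bool)} {f : (Fin N → Bool) → Bool}
  (G : ExtendedLearningGraph N Z f) {x y : Fin N → Bool} {e : Fin G.n × Fin G.n} {j : Fin N}

section Loads

/-- The edge `e` loads the index `j`: the label of its head is obtained from that of its tail
by adjoining `j`. -/
def Loads (e : Fin G.n × Fin G.n) (j : Fin N) : Prop :=
  j ∉ G.S e.1 ∧ G.S e.2 = insert j (G.S e.1)

instance (e : Fin G.n × Fin G.n) (j : Fin N) : Decidable (G.Loads e j) :=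
  inferInstanceAs (Decidable (_ ∧ _))

variable {G}

theorem Loads.unique {i : Fin N} (hi : G.Loads e i) (hj : G.Loads e j) : i = j := by
  have hmem : i ∈ insert j (G.S e.1) := hj.2 ▸ hi.2 ▸ Finset.mem_insert_self i _
  exact (Finset.mem_insert.1 hmem).resolve_right hi.1

theorem existsUnique_loads (he : e ∈ G.E) : ∃! j, G.Loads e j :=
  let ⟨j, hj⟩ := G.S_edge e he
  ⟨j, hj, fun _ hi => Loads.unique hi hj⟩

end Loads

section Cut

/-- The vertices on whose labels `x` and `y` agree. -/
def agreeVertices (x y : Fin N → Bool) : Finset (Fin G.n) :=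
  {v | ∀ i ∈ G.S v, x i = y i}

/-- The edges leaving the set of vertices on whose labels `x` and `y` agree. -/
def cut (x y : Fin N → Bool) : Finset (Fin G.n × Fin G.n) :=
  {e ∈ G.E | e.1 ∈ G.agreeVertices x y ∧ e.2 ∉ G.agreeVertices x y}

variable {G}

theorem mem_agreeVertices {v : Fin G.n} :
    v ∈ G.agreeVertices x y ↔ ∀ i ∈ G.S v, x i = y i := by
  simp [agreeVertices]

theorem Loads.snd_mem_agreeVertices_iff (h : G.Loads e j) :
    e.2 ∈ G.agreeVertices x y ↔ x j = y j ∧ e.1 ∈ G.agreeVertices x y := by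
  simp only [mem_agreeVertices, h.2, Finset.forall_mem_insert]

theorem Loads.mem_cut_iff (h : G.Loads e j) :
    e ∈ G.cut x y ↔ e ∈ G.E ∧ e.1 ∈ G.agreeVertices x y ∧ x j ≠ y j := by
  simp only [cut, Finset.mem_filter, h.snd_mem_agreeVertices_iff]
  tauto

theorem existsUnique_ne_and_loads (he : e ∈ G.cut x y) : ∃! j, x j ≠ y j ∧ G.Loads e j :=
  let ⟨j, hj, hunique⟩ := existsUnique_loads (Finset.mem_filter.1 he).1
  ⟨j, ⟨(hj.mem_cut_iff.1 he).2.2, hj⟩, fun i hi => hunique i hi.2⟩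

variable (G) in
theorem netOutflow_eq_zero (hx : x ∈ Z) (hy : y ∈ Z) (fx : f x = false) (fy : f y = true)
    {v : Fin G.n} (hv : v ∈ G.agreeVertices x y) (hroot : v ≠ G.root) :
    netOutflow G.E (G.p y) v = 0 := by
  by_cases hout : ∑ e ∈ G.E with e.1 = v, G.p y e = 0
  · suffices hin : ∑ e ∈ G.E with e.2 = v, G.p y e = 0 by rw [netOutflow, hout, hin, sub_zero]
    by_contra hin
    have fx' := G.p_sink_cert y hy fy v hin hout x hx (mem_agreeVertices.1 hv)
    exact Bool.false_ne_true (fx.symm.trans fx')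
  · exact sub_eq_zero.2 (G.p_conserve y hy fy v hroot hout)

variable (G) in
theorem sum_cut_flow (hx : x ∈ Z) (hy : y ∈ Z) (fx : f x = false) (fy : f y = true) :
    ∑ e ∈ G.cut x y, G.p y e = 1 := by
  have hentering : {e ∈ G.E | e.1 ∉ G.agreeVertices x y ∧ e.2 ∈ G.agreeVertices x y} = ∅ :=
    Finset.filter_eq_empty_iff.2 fun e he ⟨h₁, h₂⟩ =>
      let ⟨_, hj⟩ := G.S_edge e he
      h₁ (Loads.snd_mem_agreeVertices_iff hj |>.1 h₂).2
  calc ∑ e ∈ G.cut x y, G.p y e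
      = ∑ v ∈ G.agreeVertices x y, netOutflow G.E (G.p y) v := by
        rw [sum_netOutflow, hentering, Finset.sum_empty, sub_zero, cut]
    _ = netOutflow G.E (G.p y) G.root :=
        Finset.sum_eq_single_of_mem _ (by simp [mem_agreeVertices, G.S_root])
          fun v hv hroot => G.netOutflow_eq_zero hx hy fx fy hv hroot
    _ = 1 := G.p_root y hy fy

theorem w_eq_of_mem_cut (hx : x ∈ Z) (hy : y ∈ Z) (fx : f x = false) (fy : f y = true)
    (he : e ∈ G.cut x y) : G.w x false e = G.w y true e :=
  let ⟨j, ⟨hne, hj⟩, _⟩ := existsUnique_ne_and_loads he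
  have hmem := hj.mem_cut_iff.1 he
  G.w_compat x hx y hy fx fy e hmem.1 (mem_agreeVertices.1 hmem.2.1) ⟨j, hj.1, hj.2, hne⟩

end Cut

section Amplitude

/-- The amplitude of the input `z` on the edge `e`: the square root of the contribution of `e` to
the negative or positive complexity of `z`. On a positive input it is the junk value `0` when the
weight vanishes, which is correct because the flow vanishes there too. -/
noncomputable def amplitude (e : Fin G.n × Fin G.n) (z : Fin N → Bool) : ℝ :=
  if f z then G.p z e / √(G.w z true e) else √(G.w z false e)

theorem sum_amplitude_sq_of_false (fx : f x = false) :
    ∑ e ∈ G.E, G.amplitude e x ^ 2 = G.negComplexity x :=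
  Finset.sum_congr rfl fun e _ => by simp [amplitude, fx, Real.sq_sqrt (G.w_nonneg x false e)]

theorem sum_amplitude_sq_of_true (fy : f y = true) :
    ∑ e ∈ G.E, G.amplitude e y ^ 2 = G.posComplexity y :=
  Finset.sum_congr rfl fun e _ => by
    simp [amplitude, fy, div_pow, Real.sq_sqrt (G.w_nonneg y true e)]

variable {G} in
theorem amplitude_mul_amplitude (hx : x ∈ Z) (hy : y ∈ Z) (fx : f x = false) (fy : f y = true)
    (he : e ∈ G.cut x y) : G.amplitude e x * G.amplitude e y = G.p y e := by
  have hflow : √(G.w y true e) = 0 → G.p y e = 0 := fun h =>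
    G.p_zero y hy fy e (Finset.mem_filter.1 he).1 ((Real.sqrt_eq_zero (G.w_nonneg y true e)).1 h)
  simp only [amplitude, fx, fy, Bool.false_eq_true, if_false, if_true,
    w_eq_of_mem_cut hx hy fx fy he]
  exact mul_div_cancel_of_imp' hflow

theorem one_le_negComplexity_mul_posComplexity (hx : x ∈ Z) (hy : y ∈ Z) (fx : f x = false)
    (fy : f y = true) : 1 ≤ G.negComplexity x * G.posComplexity y := by
  have hsub : G.cut x y ⊆ G.E := Finset.filter_subset _ _
  have hmono : ∀ z, ∑ e ∈ G.cut x y, G.amplitude e z ^ 2 ≤ ∑ e ∈ G.E, G.amplitude e z ^ 2 :=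
    fun z => Finset.sum_le_sum_of_subset_of_nonneg hsub fun _ _ _ => sq_nonneg _
  calc (1 : ℝ)
      = (∑ e ∈ G.cut x y, G.amplitude e x * G.amplitude e y) ^ 2 := by
        rw [Finset.sum_congr rfl fun e he => amplitude_mul_amplitude hx hy fx fy he,
          G.sum_cut_flow hx hy fx fy, one_pow]
    _ ≤ (∑ e ∈ G.cut x y, G.amplitude e x ^ 2) * ∑ e ∈ G.cut x y, G.amplitude e y ^ 2 :=
        Finset.sum_mul_sq_le_sq_mul_sq _ _ _
    _ ≤ (∑ e ∈ G.E, G.amplitude e x ^ 2) * ∑ e ∈ G.E, G.amplitude e y ^ 2 :=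
        mul_le_mul (hmono x) (hmono y) (Finset.sum_nonneg fun _ _ => sq_nonneg _)
          (Finset.sum_nonneg fun _ _ => sq_nonneg _)
    _ = G.negComplexity x * G.posComplexity y := by
        rw [G.sum_amplitude_sq_of_false fx, G.sum_amplitude_sq_of_true fy]

theorem negComplexity_pos (hx : x ∈ Z) (hy : y ∈ Z) (fx : f x = false) (fy : f y = true) :
    0 < G.negComplexity x :=
  pos_of_mul_pos_left (one_pos.trans_le (G.one_le_negComplexity_mul_posComplexity hx hy fx fy))
    (G.sum_amplitude_sq_of_true fy ▸ Finset.sum_nonneg fun _ _ => sq_nonneg _)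

theorem posComplexity_pos (hx : x ∈ Z) (hy : y ∈ Z) (fx : f x = false) (fy : f y = true) :
    0 < G.posComplexity y :=
  pos_of_mul_pos_right (one_pos.trans_le (G.one_le_negComplexity_mul_posComplexity hx hy fx fy))
    (G.negComplexity_pos hx hy fx fy).le

end Amplitude

section AdversaryMatrix

/-- The color of the input `z` on an edge `e` loading `j`: the restriction of `z` to the label of
the tail of `e`, and the bit `z j`, flipped on positive inputs so that a negative and a positive
input of the same color differ at `j`. -/
def color (j : Fin N) (e : Fin G.n × Fin G.n) (z : Fin N → Bool) : (G.S e.1 → Bool) × Bool :=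
  ((G.S e.1).restrict z, xor (z j) (f z))

/-- The matrix `X j` of the adversary bound, before the positive and negative complexities are
balanced. -/
noncomputable def adversaryMatrix (j : Fin N) : Matrix Z Z ℝ :=
  ∑ e ∈ G.E with G.Loads e j, colorGram (fun z : Z => G.color j e z) fun z => G.amplitude e z

theorem posSemidef_adversaryMatrix (j : Fin N) : (G.adversaryMatrix j).PosSemidef :=
  Matrix.posSemidef_sum _ fun _ _ => posSemidef_colorGram _ _

theorem adversaryMatrix_apply (j : Fin N) (x y : Z) :
    G.adversaryMatrix j x y = ∑ e ∈ G.E with G.Loads e j,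
      if G.color j e x = G.color j e y then G.amplitude e x * G.amplitude e y else 0 := by
  simp [adversaryMatrix, colorGram, Matrix.sum_apply]

theorem sum_adversaryMatrix_diag (z : Z) :
    ∑ j, G.adversaryMatrix j z z = ∑ e ∈ G.E, G.amplitude e z ^ 2 := by
  simp only [adversaryMatrix_apply, if_true, ← sq]
  exact sum_sum_filter_of_existsUnique (by simpa using fun _ _ => existsUnique_loads) _

theorem color_eq_color_iff (fx : f x = false) (fy : f y = true) :
    G.color j e x = G.color j e y ↔ e.1 ∈ G.agreeVertices x y ∧ x j ≠ y j := by
  simp only [color, Prod.mk.injEq, funext_iff, Finset.restrict, Subtype.forall, mem_agreeVertices,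
    fx, fy, Bool.xor_false, Bool.xor_true, Bool.eq_not_iff]

theorem adversaryMatrix_apply_of_ne {x y : Z} (fx : f x = false) (fy : f y = true)
    (j : Fin N) :
    G.adversaryMatrix j x y = ∑ e ∈ G.cut x y with G.Loads e j, G.p y e := by
  rw [adversaryMatrix_apply, ← Finset.sum_filter, Finset.filter_filter]
  refine Finset.sum_congr (Finset.ext fun e => ?_) fun e he => ?_
  · simp only [Finset.mem_filter, G.color_eq_color_iff fx fy]
    exact ⟨fun ⟨he, hj, h⟩ => ⟨hj.mem_cut_iff.2 ⟨he, h⟩, hj⟩,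
      fun ⟨he, hj⟩ => ⟨(hj.mem_cut_iff.1 he).1, hj, (hj.mem_cut_iff.1 he).2⟩⟩
  · exact amplitude_mul_amplitude x.2 y.2 fx fy (Finset.mem_filter.1 he).1

theorem sum_adversaryMatrix_of_false_true {x y : Z} (fx : f x = false) (fy : f y = true) :
    ∑ j with x.1 j ≠ y.1 j, G.adversaryMatrix j x y = 1 := by
  simp only [G.adversaryMatrix_apply_of_ne fx fy]
  rw [sum_sum_filter_of_existsUnique
    (fun e he => by simpa using existsUnique_ne_and_loads he), G.sum_cut_flow x.2 y.2 fx fy]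

theorem sum_adversaryMatrix_of_ne {x y : Z} (hxy : f x ≠ f y) :
    ∑ j with x.1 j ≠ y.1 j, G.adversaryMatrix j x y = 1 := by
  cases fx : f x
  · exact G.sum_adversaryMatrix_of_false_true fx (by simpa [fx] using hxy.symm)
  · have hsymm : ∀ j, G.adversaryMatrix j x y = G.adversaryMatrix j y x := fun j =>
      ((G.posSemidef_adversaryMatrix j).isHermitian.apply x y).symm
    simp only [hsymm, ne_comm (a := x.1 _)]
    exact G.sum_adversaryMatrix_of_false_true (by simpa [fx] using hxy.symm) fx

end AdversaryMatrix

end ExtendedLearningGraph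

/-- Let `Z ⊆ {0,1}^N` be nonempty, `f : Z → {0,1}`
non-constant, and `G` an extended learning graph for `f` with negative
complexity at most `C0m` on every negative instance and positive complexity at
most `C1m` on every positive instance (so that its complexity
`C(G) = √(C⁰(G)·C¹(G))` is at most `√(C0m·C1m)`).  Then the general adversary
bound of `f` is at most `√(C0m·C1m)`: there is a family `(X_j)_{j∈[N]}` of
positive semidefinite real matrices indexed by `Z` with
`Σ_{j : x_j ≠ y_j} X_j[x,y] = 1` whenever `f(x) ≠ f(y)`, and
`Σ_{j∈[N]} X_j[z,z] ≤ √(C0m·C1m)` for every `z ∈ Z`. -/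
theorem stmt_0 (N : ℕ) (hN : 0 < N) (Z : Finset (Fin N → Bool))
    (f : (Fin N → Bool) → Bool)
    (hneg : ∃ x ∈ Z, f x = false) (hpos : ∃ y ∈ Z, f y = true)
    (G : ExtendedLearningGraph N Z f) (C0m C1m : ℝ)
    (hC0 : ∀ x ∈ Z, f x = false → G.negComplexity x ≤ C0m)
    (hC1 : ∀ y ∈ Z, f y = true → G.posComplexity y ≤ C1m) :
    ∃ X : Fin N → Matrix Z Z ℝ,
      (∀ j, (X j).PosSemidef) ∧
      (∀ x y : Z, f x.1 ≠ f y.1 →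
        ∑ j ∈ Finset.univ.filter (fun j : Fin N => x.1 j ≠ y.1 j), X j x y = 1) ∧
      (∀ z : Z, ∑ j, X j z z ≤ Real.sqrt (C0m * C1m)) := by
  obtain ⟨x₀, hx₀, fx₀⟩ := hneg
  obtain ⟨y₀, hy₀, fy₀⟩ := hpos
  have hC0m : 0 < C0m := (G.negComplexity_pos hx₀ hy₀ fx₀ fy₀).trans_le (hC0 x₀ hx₀ fx₀)
  have hC1m : 0 < C1m := (G.posComplexity_pos hx₀ hy₀ fx₀ fy₀).trans_le (hC1 y₀ hy₀ fy₀)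
  let β : Z → ℝ := fun z => if f z then C1m else C0m
  have hβ : ∀ z, 0 < β z := fun z => by dsimp only [β]; split_ifs <;> assumption
  have hdiag : ∀ z : Z, ∑ j, G.adversaryMatrix j z z ≤ β z := fun z => by
    rw [G.sum_adversaryMatrix_diag]
    cases fz : f z
    · simpa [β, fz, G.sum_amplitude_sq_of_false fz] using hC0 z z.2 fz
    · simpa [β, fz, G.sum_amplitude_sq_of_true fz] using hC1 z z.2 fz
  have hβ_mul : ∀ x y : Z, f x ≠ f y → β x * β y = √(C0m * C1m) ^ 2 := fun x y hxy => by
    rw [Real.sq_sqrt (mul_pos hC0m hC1m).le]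
    cases fx : f x <;> cases fy : f y <;> simp_all [β, mul_comm]
  obtain ⟨X, hX, hX_eq, hX_diag⟩ := exists_posSemidef_rescale G.posSemidef_adversaryMatrix hβ hdiag
    (Real.sqrt_pos.2 (mul_pos hC0m hC1m))
  refine ⟨X, hX, fun x y hxy => ?_, hX_diag⟩
  simp only [hX_eq _ x y (hβ_mul x y hxy)]
  exact G.sum_adversaryMatrix_of_ne hxy
end

section
/- Let N ≥ 1 be an integer and let z ∈ {0,1}^N. For j ∈ {1, …, N} let s_j denote the number of indices i < j with z_i = 1, and let k denote the Hamming weight of z. Then: (i) Σ_{j : z_j = 0} 3·(s_j + 1)·ln(N+1) + Σ_{j : z_j = 1} 3·N·ln(N+1) ≤ 6·N·(k+1)·ln(N+1); and (ii) Σ_{j : z_j = 0} 1/(3·N·ln(N+1)) + Σ_{j : z_j = 1} 1/(3·(s_j + 1)·ln(N+1)) ≤ 1. -/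
/-!
Write `T` for the set of positions of the ones in `z`, so that `s j` counts the elements of `T`
below `j`. As `j` runs through `T`, `s j` takes each of the values `0, …, k - 1` exactly once.
Hence in (ii) the ones contribute `H_k / (3 ln (N + 1))`. Each of the `N - k` zeros contributes
`1 / N` (over the same denominator), which is at most any of the terms `1 / (k + 1), …, 1 / N`
completing `H_k` to `H_N`, so the whole sum is at most `H_N / (3 ln (N + 1)) ≤ 1`. For (i) it is
enough that `s j ≤ k`.
-/

open Finset

section RankIn

variable {α : Type*} [LinearOrder α]

/-- The rank of `j` relative to a finite set `T`: the number of elements of `T` strictly below `j`.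
The point `j` itself need not belong to `T`. When `T` is the set of positions of the ones of a bit
string, this is the count `s_j`. -/
def rankIn (T : Finset α) (j : α) : ℕ := #{i ∈ T | i < j}

theorem rankIn_le_card (T : Finset α) (j : α) : rankIn T j ≤ #T :=
  card_filter_le _ _

theorem rankIn_insert_of_le {T : Finset α} {a j : α} (h : j ≤ a) :
    rankIn (insert a T) j = rankIn T j := by
  rw [rankIn, filter_insert, if_neg h.not_gt, rankIn]

theorem rankIn_eq_card {T : Finset α} {a : α} (h : ∀ i ∈ T, i < a) : rankIn T a = #T := by
  rw [rankIn, filter_true_of_mem h]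

theorem sum_comp_rankIn {M : Type*} [AddCommMonoid M] (T : Finset α) (f : ℕ → M) :
    ∑ j ∈ T, f (rankIn T j) = ∑ i ∈ range #T, f i := by
  induction T using Finset.induction_on_max with
  | empty => simp
  | insert a T hlt ih =>
    have ha : a ∉ T := fun h => (hlt a h).false
    rw [sum_insert ha, card_insert_of_notMem ha, sum_range_succ, ← ih,
      rankIn_insert_of_le le_rfl, rankIn_eq_card hlt, add_comm]
    congr 1
    exact sum_congr rfl fun j hj => by rw [rankIn_insert_of_le (hlt j hj).le]

theorem sum_inv_rankIn_add_one (T : Finset α) :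
    ∑ j ∈ T, ((rankIn T j : ℚ) + 1)⁻¹ = harmonic #T := by
  simpa [harmonic] using sum_comp_rankIn T fun i => ((i : ℚ) + 1)⁻¹

end RankIn

theorem harmonic_add_sub_div_le_harmonic {k n : ℕ} (hkn : k ≤ n) :
    harmonic k + ((n : ℚ) - k) / n ≤ harmonic n := by
  have tail : ((n : ℚ) - k) / n ≤ ∑ i ∈ Ico k n, ((i + 1 : ℕ) : ℚ)⁻¹ := by
    calc ((n : ℚ) - k) / n = #(Ico k n) • (n : ℚ)⁻¹ := by
          rw [Nat.card_Ico, nsmul_eq_mul, Nat.cast_sub hkn, div_eq_mul_inv]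
      _ ≤ ∑ i ∈ Ico k n, ((i + 1 : ℕ) : ℚ)⁻¹ := card_nsmul_le_sum _ _ _ fun i hi => by
          have : i + 1 ≤ n := (mem_Ico.1 hi).2
          gcongr
  calc harmonic k + ((n : ℚ) - k) / n
      ≤ harmonic k + ∑ i ∈ Ico k n, ((i + 1 : ℕ) : ℚ)⁻¹ := by gcongr
    _ = harmonic n := sum_range_add_sum_Ico _ hkn

theorem harmonic_le_three_mul_log_add_one (n : ℕ) :
    (harmonic n : ℝ) ≤ 3 * Real.log (n + 1) := by
  rcases n.eq_zero_or_pos with rfl | hn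
  · simp
  have hn' : (1 : ℝ) ≤ n := mod_cast hn
  have log_n_le : Real.log n ≤ Real.log (n + 1) := by gcongr; linarith
  have log_two_le : Real.log 2 ≤ Real.log (n + 1) := by gcongr; linarith
  linarith [harmonic_le_one_add_log n, Real.log_two_gt_d9]

section Fintype

variable {α : Type*} [LinearOrder α] [Fintype α]

theorem sum_compl_rankIn_add_one_add_sum_card_le (T : Finset α) :
    ∑ j ∈ Tᶜ, (rankIn T j + 1) + ∑ _j ∈ T, Fintype.card α ≤
      2 * Fintype.card α * (#T + 1) := by
  calc ∑ j ∈ Tᶜ, (rankIn T j + 1) + ∑ _j ∈ T, Fintype.card α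
      ≤ ∑ _j ∈ Tᶜ, (#T + 1) + ∑ _j ∈ T, Fintype.card α := by gcongr; exact rankIn_le_card T _
    _ = #Tᶜ * (#T + 1) + #T * Fintype.card α := by simp only [sum_const, smul_eq_mul]
    _ ≤ Fintype.card α * (#T + 1) + (#T + 1) * Fintype.card α := by
        gcongr
        · exact card_le_univ _
        · exact Nat.le_succ _
    _ = 2 * Fintype.card α * (#T + 1) := by ring

theorem sum_compl_inv_card_add_sum_inv_rankIn_add_one_le (T : Finset α) :
    ∑ _j ∈ Tᶜ, (Fintype.card α : ℚ)⁻¹ + ∑ j ∈ T, ((rankIn T j : ℚ) + 1)⁻¹ ≤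
      harmonic (Fintype.card α) := by
  have hT : #T ≤ Fintype.card α := card_le_univ T
  rw [sum_inv_rankIn_add_one, sum_const, card_compl, nsmul_eq_mul, Nat.cast_sub hT,
    ← div_eq_mul_inv, add_comm]
  exact harmonic_add_sub_div_le_harmonic hT

end Fintype

/-- Let `N ≥ 1` and `z ∈ {0,1}^N`.  For `j ∈ [N]`, let `s j`
be the number of indices `i < j` with `z i = 1`, and let `k` be the Hamming
weight of `z`.  Then
(i) `Σ_{j : z_j = 0} 3·(s_j+1)·ln(N+1) + Σ_{j : z_j = 1} 3·N·ln(N+1)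
      ≤ 6·N·(k+1)·ln(N+1)`, and
(ii) `Σ_{j : z_j = 0} 1/(3·N·ln(N+1)) + Σ_{j : z_j = 1} 1/(3·(s_j+1)·ln(N+1)) ≤ 1`. -/
theorem stmt_2 (N : ℕ) (hN : 1 ≤ N) (z : Fin N → Bool)
    (s : Fin N → ℕ)
    (hs : ∀ j, s j = (Finset.univ.filter fun i : Fin N => i < j ∧ z i = true).card)
    (k : ℕ) (hk : k = (Finset.univ.filter fun j : Fin N => z j = true).card) :
    ((∑ j ∈ Finset.univ.filter (fun j : Fin N => z j = false),
          3 * ((s j : ℝ) + 1) * Real.log (N + 1))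
        + (∑ j ∈ Finset.univ.filter (fun j : Fin N => z j = true),
          3 * (N : ℝ) * Real.log (N + 1))
      ≤ 6 * (N : ℝ) * ((k : ℝ) + 1) * Real.log (N + 1)) ∧
    ((∑ j ∈ Finset.univ.filter (fun j : Fin N => z j = false),
          1 / (3 * (N : ℝ) * Real.log (N + 1)))
        + (∑ j ∈ Finset.univ.filter (fun j : Fin N => z j = true),
          1 / (3 * ((s j : ℝ) + 1) * Real.log (N + 1)))
      ≤ 1) := by
  set T : Finset (Fin N) := {j | z j = true} with hT
  have hTc : ({j | z j = false} : Finset (Fin N)) = Tᶜ := by ext; simp [hT]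
  obtain rfl : s = rankIn T := funext fun j => by rw [hs, rankIn, filter_filter]; simp [and_comm]
  rw [hTc, hk]
  set L := Real.log (N + 1)
  have hL : 0 ≤ L := Real.log_nonneg (by simp)
  constructor
  · have weight_le : ∑ j ∈ Tᶜ, ((rankIn T j : ℝ) + 1) + ∑ _j ∈ T, (N : ℝ) ≤ 2 * N * (#T + 1) := by
      have := sum_compl_rankIn_add_one_add_sum_card_le T
      rw [Fintype.card_fin] at this
      exact_mod_cast this
    calc _ = 3 * L * (∑ j ∈ Tᶜ, ((rankIn T j : ℝ) + 1) + ∑ _j ∈ T, (N : ℝ)) := by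
          rw [mul_add, mul_sum, mul_sum]
          congr! 2 <;> ring
      _ ≤ 3 * L * (2 * N * (#T + 1)) := by gcongr
      _ = _ := by ring
  · calc _ = (∑ _j ∈ Tᶜ, (N : ℝ)⁻¹ + ∑ j ∈ T, ((rankIn T j : ℝ) + 1)⁻¹) / (3 * L) := by
          rw [add_div, sum_div, sum_div]
          congr! 2 <;> field_simp
      _ ≤ harmonic N / (3 * L) := by
          gcongr
          simpa using
            Rat.cast_mono (K := ℝ) (sum_compl_inv_card_add_sum_inv_rankIn_add_one_le T)
      _ ≤ 1 := div_le_one_of_le₀ (harmonic_le_three_mul_log_add_one N) (by positivity)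
end

section
/- Let x and b be positive integers, let G be a simple graph on a finite vertex set V with |V| = n and x ≤ n, and let B ⊆ V with |B| = b. For X ⊆ V and w ∈ V, let Δ(X, B, w) = {(u, v) ∈ B × B : both u and v are adjacent to w, and no vertex of X is adjacent to both u and v}. Then the average of |Δ(X, B, w)| over all x-element subsets X ⊆ V (uniformly) and all vertices w ∈ V (uniformly) is at most b²/x; equivalently, Σ_{X ⊆ V, |X| = x} Σ_{w ∈ V} |Δ(X, B, w)| ≤ (b²/x) · n · C(n, x). -/
/-!
Fix a pair `(u, v)` and let `P` be the property of being adjacent to both `u` and `v`. The pair is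
counted by `(X, w)` exactly when `w` satisfies `P` and no element of `X` does. Then `w` is the only
element of `X ∪ {w}` satisfying `P`, so `(X, w)` can be recovered from this `(x + 1)`-set. Each pair
is therefore counted at most `C(n, x + 1) ≤ n / (x + 1) * C(n, x)` times.
-/

section

open Finset

variable {α ι : Type*}

theorem card_filter_and_forall_not_le_choose (P : α → Prop) [DecidablePred P] (A : Finset α)
    (k : ℕ) :
    #{p ∈ A.powersetCard k ×ˢ A | P p.2 ∧ ∀ s ∈ p.1, ¬P s} ≤ (#A).choose (k + 1) := by
  classical
  rw [← card_powersetCard]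
  refine card_le_card_of_injOn (fun p ↦ insert p.2 p.1) ?mapsTo ?injOn
  case mapsTo =>
    rintro ⟨X, w⟩ hp
    simp only [coe_filter, mem_product, mem_powersetCard, Set.mem_ofPred_eq] at hp
    obtain ⟨⟨⟨hXA, hX⟩, hwA⟩, hw, hPX⟩ := hp
    have hwX : w ∉ X := fun h ↦ hPX w h hw
    exact mem_powersetCard.2 ⟨insert_subset hwA hXA, by rw [card_insert_of_notMem hwX, hX]⟩
  case injOn =>
    rintro ⟨X, w⟩ hp ⟨Y, v⟩ hq (h : insert w X = insert v Y)
    obtain ⟨hw, hPX⟩ := (mem_filter.1 hp).2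
    obtain ⟨hv, hPY⟩ := (mem_filter.1 hq).2
    have hwv : w = v :=
      (mem_insert.1 (h ▸ mem_insert_self w X)).resolve_right fun hwY ↦ hPY w hwY hw
    subst hwv
    have hwX : w ∉ X := fun hwX ↦ hPX w hwX hw
    have hwY : w ∉ Y := fun hwY ↦ hPY w hwY hw
    rw [← erase_insert hwX, h, erase_insert hwY]

theorem sum_card_filter_and_forall_not_le (P : α → ι → Prop) [∀ a, DecidablePred (P a)]
    (A : Finset α) (T : Finset ι) (k : ℕ) :
    ∑ X ∈ A.powersetCard k, ∑ w ∈ A, #{i ∈ T | P w i ∧ ∀ s ∈ X, ¬P s i} ≤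
      #T * (#A).choose (k + 1) := by
  rw [← sum_product' (f := fun X w ↦ #{i ∈ T | P w i ∧ ∀ s ∈ X, ¬P s i})]
  calc ∑ p ∈ A.powersetCard k ×ˢ A, #{i ∈ T | P p.2 i ∧ ∀ s ∈ p.1, ¬P s i}
      = ∑ i ∈ T, #{p ∈ A.powersetCard k ×ˢ A | P p.2 i ∧ ∀ s ∈ p.1, ¬P s i} :=
        sum_card_bipartiteAbove_eq_sum_card_bipartiteBelow _
    _ ≤ #T * (#A).choose (k + 1) :=
        sum_le_card_nsmul _ _ _ fun i _ ↦ card_filter_and_forall_not_le_choose (P · i) A k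

theorem choose_succ_mul_succ_le_mul_choose (n k : ℕ) :
    n.choose (k + 1) * (k + 1) ≤ n * n.choose k := by
  rw [Nat.choose_succ_right_eq, mul_comm]
  exact Nat.mul_le_mul_right _ (Nat.sub_le n k)

theorem stmt_3_general (P : α → ι → Prop) [∀ a, DecidablePred (P a)] (A : Finset α)
    (T : Finset ι) (k : ℕ) :
    ∑ X ∈ A.powersetCard k, ∑ w ∈ A, (#{i ∈ T | P w i ∧ ∀ s ∈ X, ¬P s i} : ℝ) ≤
      (#T : ℝ) / (k + 1) * #A * (#A).choose k := by
  rw [div_mul_eq_mul_div, div_mul_eq_mul_div, le_div_iff₀ (by positivity)]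
  norm_cast
  calc (∑ X ∈ A.powersetCard k, ∑ w ∈ A, #{i ∈ T | P w i ∧ ∀ s ∈ X, ¬P s i}) * (k + 1)
      ≤ #T * (#A).choose (k + 1) * (k + 1) :=
        Nat.mul_le_mul_right _ (sum_card_filter_and_forall_not_le P A T k)
    _ ≤ #T * (#A * (#A).choose k) := by
        rw [mul_assoc]
        exact Nat.mul_le_mul_left _ (choose_succ_mul_succ_le_mul_choose _ k)
    _ = #T * #A * (#A).choose k := (mul_assoc ..).symm

end

/-- Let `G` be a simple graph on a finite vertex set `V` with
`|V| = n`, let `x, b` be positive integers with `x ≤ n`, and let `B ⊆ V` with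
`|B| = b`.  For `X ⊆ V` and `w ∈ V`, let
`Δ(X, B, w) = {(u,v) ∈ B × B : w` is adjacent to both `u` and `v`, and no vertex
of `X` is adjacent to both `u` and `v}`.  Then
`Σ_{X ⊆ V, |X| = x} Σ_{w ∈ V} |Δ(X, B, w)| ≤ (b²/x) · n · C(n, x)`. -/
theorem stmt_3 {V : Type*} [Fintype V] [DecidableEq V]
    (G : SimpleGraph V) [DecidableRel G.Adj]
    (n x b : ℕ) (hn : Fintype.card V = n) (hx : 0 < x) (hb : 0 < b) (hxn : x ≤ n)
    (B : Finset V) (hB : B.card = b) :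
    ∑ X ∈ Finset.powersetCard x (Finset.univ : Finset V), ∑ w : V,
        (((B ×ˢ B).filter fun uv =>
            G.Adj w uv.1 ∧ G.Adj w uv.2
              ∧ ∀ s ∈ X, ¬(G.Adj s uv.1 ∧ G.Adj s uv.2)).card : ℝ)
      ≤ ((b : ℝ) ^ 2 / x) * n * n.choose x := by
  have h := stmt_3_general (fun w (uv : V × V) ↦ G.Adj w uv.1 ∧ G.Adj w uv.2) .univ (B ×ˢ B) x
  simp only [and_assoc, Finset.card_product, Finset.card_univ, hn, hB, ← sq, Nat.cast_pow] at h
  exact h.trans (by gcongr; exact le_add_of_nonneg_right zero_le_one)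
end

section
/- Let V₁ be a finite set with |V₁| = n, let N ⊆ V₁ with |N| = t, and let 1 ≤ x ≤ n be an integer such that x·t ≥ n. Then the average of |N ∩ X|² over all x-element subsets X of V₁ is at most 2·(x·t/n)². -/
/-!
Expanding the square, `∑ X, |N ∩ X|²` counts triples `(a, b, X)` with `a, b ∈ N ∩ X`. A fixed
`k`-element set lies in a proportion `x(x-1)⋯(x-k+1) / (n(n-1)⋯(n-k+1)) ≤ (x/n)ᵏ` of the
`x`-element sets `X`, so, with `μ = xt/n`, the pairs `a ≠ b` contribute at most `μ²` to the average
and the pairs `a = b` at most `μ`. Finally `μ ≤ μ²` because `μ ≥ 1`.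
-/

open Finset

section Binomial

variable {m n : ℕ}

theorem descFactorial_mul_pow_le (h : m ≤ n) (k : ℕ) :
    m.descFactorial k * n ^ k ≤ n.descFactorial k * m ^ k := by
  induction k with
  | zero => simp
  | succ k ih =>
    have hfactor : (m - k) * n ≤ (n - k) * m := by
      rw [Nat.sub_mul, Nat.sub_mul, mul_comm n m]
      gcongr
    calc m.descFactorial (k + 1) * n ^ (k + 1)
        = (m - k) * n * (m.descFactorial k * n ^ k) := by rw [Nat.descFactorial_succ]; ring
      _ ≤ (n - k) * m * (n.descFactorial k * m ^ k) := Nat.mul_le_mul hfactor ih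
      _ = n.descFactorial (k + 1) * m ^ (k + 1) := by rw [Nat.descFactorial_succ]; ring

theorem choose_mul_pow_le (h : m ≤ n) (k : ℕ) : m.choose k * n ^ k ≤ n.choose k * m ^ k := by
  refine Nat.le_of_mul_le_mul_left ?_ k.factorial_pos
  simpa only [Nat.descFactorial_eq_factorial_mul_choose, mul_assoc] using
    descFactorial_mul_pow_le h k

theorem choose_sub_sub_mul_pow_le {k : ℕ} (hkm : k ≤ m) (hmn : m ≤ n) :
    (n - k).choose (m - k) * n ^ k ≤ n.choose m * m ^ k := by
  refine Nat.le_of_mul_le_mul_left ?_ (Nat.choose_pos (hkm.trans hmn))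
  calc n.choose k * ((n - k).choose (m - k) * n ^ k)
      = n.choose m * (m.choose k * n ^ k) := by rw [← mul_assoc, ← Nat.choose_mul hkm, mul_assoc]
    _ ≤ n.choose m * (n.choose k * m ^ k) := Nat.mul_le_mul_left _ (choose_mul_pow_le hmn k)
    _ = n.choose k * (n.choose m * m ^ k) := Nat.mul_left_comm ..

end Binomial

section SecondMoment

variable {α : Type*} [DecidableEq α]

theorem card_filter_powersetCard_subset_mul_pow_le (S V : Finset α) (x : ℕ) :
    #{X ∈ V.powersetCard x | S ⊆ X} * #V ^ #S ≤ (#V).choose x * x ^ #S := by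
  obtain hempty | ⟨X, hX⟩ := ({X ∈ V.powersetCard x | S ⊆ X} : Finset _).eq_empty_or_nonempty
  · simp [hempty]
  · simp only [mem_filter, mem_powersetCard] at hX
    obtain ⟨⟨hXV, rfl⟩, hSX⟩ := hX
    rw [card_filter_powersetCard_subset S V _ (hSX.trans hXV) (card_le_card hSX)]
    exact choose_sub_sub_mul_pow_le (card_le_card hSX) (card_le_card hXV)

theorem card_filter_powersetCard_subset_le (S V : Finset α) (x : ℕ) :
    (#{X ∈ V.powersetCard x | S ⊆ X} : ℝ) ≤ (#V).choose x * ((x : ℝ) / #V) ^ #S := by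
  obtain rfl | hV := V.eq_empty_or_nonempty
  · obtain rfl | hS := S.eq_empty_or_nonempty
    · simp
    · cases x <;> simp [filter_singleton, hS.ne_empty]
  · rw [div_pow, ← mul_div_assoc, le_div_iff₀ (by positivity)]
    exact_mod_cast card_filter_powersetCard_subset_mul_pow_le S V x

theorem sum_card_inter_sq (N : Finset α) (F : Finset (Finset α)) :
    ∑ X ∈ F, #(N ∩ X) ^ 2 = ∑ q ∈ N ×ˢ N, #{X ∈ F | {q.1, q.2} ⊆ X} := by
  calc ∑ X ∈ F, #(N ∩ X) ^ 2
      = ∑ X ∈ F, #{q ∈ N ×ˢ N | {q.1, q.2} ⊆ X} := by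
        refine sum_congr rfl fun X _ ↦ ?_
        rw [sq, ← card_product]
        congr 1
        grind
    _ = ∑ q ∈ N ×ˢ N, #{X ∈ F | {q.1, q.2} ⊆ X} :=
        sum_card_bipartiteAbove_eq_sum_card_bipartiteBelow
          fun (X : Finset α) (q : α × α) ↦ {q.1, q.2} ⊆ X

theorem sum_product_pow_card_pair {R : Type*} [CommRing R] (N : Finset α) (p : R) :
    ∑ q ∈ N ×ˢ N, p ^ #{q.1, q.2} = #N * p + #N * (#N - 1) * p ^ 2 := by
  have hdiag : ∑ q ∈ N.diag, p ^ #{q.1, q.2} = #N * p := by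
    simp [sum_diag]
  have hoffDiag : ∑ q ∈ N.offDiag, p ^ #{q.1, q.2} = #N * (#N - 1) * p ^ 2 := by
    rw [sum_congr rfl fun q hq ↦ by rw [card_pair (mem_offDiag.1 hq).2.2], sum_const, offDiag_card,
      nsmul_eq_mul, Nat.cast_sub (Nat.le_mul_self _)]
    push_cast
    ring
  rw [← diag_union_offDiag, sum_union (disjoint_diag_offDiag N), hdiag, hoffDiag]

theorem sum_powersetCard_card_inter_sq_le (V N : Finset α) (x : ℕ) :
    ∑ X ∈ V.powersetCard x, (#(N ∩ X) : ℝ) ^ 2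
      ≤ (#V).choose x * (#N * ((x : ℝ) / #V) + #N * (#N - 1) * ((x : ℝ) / #V) ^ 2) := by
  calc ∑ X ∈ V.powersetCard x, (#(N ∩ X) : ℝ) ^ 2
      = ∑ q ∈ N ×ˢ N, (#{X ∈ V.powersetCard x | {q.1, q.2} ⊆ X} : ℝ) := by
        exact_mod_cast sum_card_inter_sq N (V.powersetCard x)
    _ ≤ ∑ q ∈ N ×ˢ N, (#V).choose x * ((x : ℝ) / #V) ^ #{q.1, q.2} :=
        sum_le_sum fun q _ ↦ card_filter_powersetCard_subset_le {q.1, q.2} V x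
    _ = (#V).choose x * (#N * ((x : ℝ) / #V) + #N * (#N - 1) * ((x : ℝ) / #V) ^ 2) := by
        rw [← mul_sum, sum_product_pow_card_pair]

end SecondMoment

theorem stmt_7_general {α : Type*} [DecidableEq α] (V N : Finset α) (x : ℕ)
    (hx1 : 1 ≤ x) (hx2 : x ≤ #V) (hxt : #V ≤ x * #N) :
    (∑ X ∈ V.powersetCard x, (#(N ∩ X) : ℝ) ^ 2) / (#V).choose x
      ≤ 2 * (((x : ℝ) * #N) / #V) ^ 2 := by
  have hchoose : (0 : ℝ) < (#V).choose x := mod_cast Nat.choose_pos hx2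
  have hV : (0 : ℝ) < #V := mod_cast hx1.trans hx2
  set p : ℝ := x / #V with hp
  have hmean : (x : ℝ) * #N / #V = #N * p := by rw [hp]; ring
  have hmean_ge_one : 1 ≤ #N * p := by
    rw [← hmean, one_le_div hV]
    exact_mod_cast hxt
  rw [hmean, div_le_iff₀' hchoose]
  refine (sum_powersetCard_card_inter_sq_le V N x).trans ?_
  gcongr
  calc #N * p + #N * (#N - 1) * p ^ 2
      = #N * p + (#N * p) ^ 2 - #N * p ^ 2 := by ring
    _ ≤ #N * p + (#N * p) ^ 2 := sub_le_self _ (by positivity)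
    _ ≤ (#N * p) ^ 2 + (#N * p) ^ 2 := by gcongr; exact le_self_pow₀ hmean_ge_one two_ne_zero
    _ = 2 * (#N * p) ^ 2 := (two_mul _).symm

/-- Let `V₁` be a finite set with `|V₁| = n`, let `N ⊆ V₁` with
`|N| = t`, and let `1 ≤ x ≤ n` be such that `x·t ≥ n`.  Then the average of
`|N ∩ X|²` over all `x`-element subsets `X ⊆ V₁` is at most `2·(x·t/n)²`. -/
theorem stmt_7 {α : Type*} [DecidableEq α] (V1 N : Finset α) (hN : N ⊆ V1)
    (n t x : ℕ) (hn : V1.card = n) (ht : N.card = t)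
    (hx1 : 1 ≤ x) (hx2 : x ≤ n) (hxt : n ≤ x * t) :
    (∑ X ∈ V1.powersetCard x, ((N ∩ X).card : ℝ) ^ 2) / (n.choose x)
      ≤ 2 * (((x : ℝ) * t) / n) ^ 2 := by
  subst hn ht
  exact stmt_7_general V1 N x hx1 hx2 hxt
end
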